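/- Let f ∈ R[x_1,...,x_n] be homogeneous of degree d and write f^2 = Σ a·x^μ as a sum of terms. Then Cov(f) = (π^{n/2} / (2^d Γ(n/2 + d + 1))) · Σ a·Ψ(x^μ), where Ψ(x^μ) = (∏_{k=1}^n η(μ_k)!!) · [diag(μ) + I_n if μ has no odd entries; e_u e_v^T + e_v e_u^T if μ has exactly two odd entries at indices u, v; the zero matrix otherwise], and η(s) = s if s is odd, s-1 if s is even. -/

import Mathlib

open Matrix

open MeasureTheory Metric MvPolynomial

/-- Polynomial-weighted covariance matrix: Cov(f) = ∫_{S^{n-1}} f(x)² x xᵀ dμ(x). -/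
noncomputable def pwCov {n : ℕ} (f : (Fin n → ℝ) → ℝ) : Matrix (Fin n) (Fin n) ℝ :=
  Matrix.of fun i j =>
    ∫ x : Metric.sphere (0 : EuclideanSpace ℝ (Fin n)) 1,
      (f (fun k => (x : EuclideanSpace ℝ (Fin n)) k))^2 * (x : EuclideanSpace ℝ (Fin n)) i
        * (x : EuclideanSpace ℝ (Fin n)) j ∂ (MeasureTheory.volume.toSphere)

/-- η(s) rounds s down to the nearest odd number. -/
def eta (s : ℕ) : ℕ := if Odd s then s else s - 1

open scoped Classical in
/-- Ψ(x^μ) = (∏ₖ η(μₖ)!!) · (diag(μ)+Iₙ if μ has no odd entries;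
eₑeᵥᵀ+eᵥeₑᵀ if μ has exactly two odd entries at indices u,v; 0 otherwise),
written entrywise. -/
noncomputable def Psi {n : ℕ} (μ : Fin n →₀ ℕ) : Matrix (Fin n) (Fin n) ℝ :=
  Matrix.of fun i j =>
    (∏ k, (Nat.doubleFactorial (eta (μ k)) : ℝ)) *
      (if ∀ k, Even (μ k) then (if i = j then (μ i : ℝ) + 1 else 0)
       else if (Finset.univ.filter fun k => Odd (μ k)) = {i, j} ∧ i ≠ j then 1 else 0)

/-!
Integrate a monomial `x ^ ν` against the Gaussian weight `exp (-‖x‖ ^ 2)` in two ways. In Cartesian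
coordinates the integral is a product of one-dimensional Gaussian moments; in polar coordinates it
is the integral of `x ^ ν` over the sphere times a radial integral, which is a value of `Γ`. This
determines the spherical integral of every monomial, in particular of `x ^ μ * x i * x j`, and the
parities of the exponents of the latter produce the case distinction in `Psi`.
-/

section PolarCoordinates

variable {F : Type*} [NormedAddCommGroup F] [NormedSpace ℝ F]

theorem integral_volumeIoiPow (n : ℕ) (g : ℝ → F) :
    ∫ r : Set.Ioi (0 : ℝ), g r ∂Measure.volumeIoiPow n = ∫ r in Set.Ioi (0 : ℝ), r ^ n • g r := by
  simp only [Measure.volumeIoiPow, ENNReal.ofReal]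
  rw [integral_withDensity_eq_integral_smul (measurable_subtype_coe.pow_const n).real_toNNReal,
    integral_subtype_comap measurableSet_Ioi fun r : ℝ ↦ Real.toNNReal (r ^ n) • g r]
  refine setIntegral_congr_fun measurableSet_Ioi fun r hr ↦ ?_
  simp only [NNReal.smul_def, Real.coe_toNNReal _ (pow_nonneg (le_of_lt hr) n)]

variable {E : Type*} [NormedAddCommGroup E] [NormedSpace ℝ E] [FiniteDimensional ℝ E]
  [Nontrivial E] [MeasurableSpace E] [BorelSpace E] (μ : Measure E) [μ.IsAddHaarMeasure]

theorem integral_addHaar_eq_integral_sphere_prod_Ioi (f : E → F) :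
    ∫ x, f x ∂μ = ∫ p : sphere (0 : E) 1 × Set.Ioi (0 : ℝ), f ((p.2 : ℝ) • (p.1 : E))
      ∂μ.toSphere.prod (.volumeIoiPow (Module.finrank ℝ E - 1)) := by
  have polar (x : ({0}ᶜ : Set E)) : ‖(x : E)‖ • ‖(x : E)‖⁻¹ • (x : E) = x :=
    smul_inv_smul₀ (norm_ne_zero_iff.mpr x.2) _
  calc ∫ x, f x ∂μ = ∫ x : ({0}ᶜ : Set E), f x ∂μ.comap (↑) := by
        rw [integral_subtype_comap (measurableSet_singleton 0).compl, restrict_compl_singleton]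
    _ = _ := by
        rw [← μ.measurePreserving_homeomorphUnitSphereProd.integral_comp
          (Homeomorph.measurableEmbedding _)]
        simp [polar]

theorem integral_homogeneous_smul_fun_norm_addHaar {f : E → ℝ} {m : ℕ}
    (hf : ∀ r : ℝ, 0 < r → ∀ x, f (r • x) = r ^ m * f x) (g : ℝ → F) :
    ∫ x, f x • g ‖x‖ ∂μ = (∫ x : sphere (0 : E) 1, f x ∂μ.toSphere) •
      ∫ r in Set.Ioi (0 : ℝ), r ^ (Module.finrank ℝ E - 1 + m) • g r := by
  have separate (p : sphere (0 : E) 1 × Set.Ioi (0 : ℝ)) :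
      f ((p.2 : ℝ) • (p.1 : E)) • g ‖(p.2 : ℝ) • (p.1 : E)‖ =
        f p.1 • (p.2 : ℝ) ^ m • g p.2 := by
    rw [hf _ p.2.2, norm_smul, norm_eq_of_mem_sphere, mul_one, Real.norm_of_nonneg p.2.2.out.le,
      smul_smul, mul_comm]
  simp_rw [integral_addHaar_eq_integral_sphere_prod_Ioi μ fun x ↦ f x • g ‖x‖, separate, pow_add,
    mul_smul]
  rw [← integral_volumeIoiPow _ fun r ↦ r ^ m • g r]
  exact integral_prod_smul (fun x : sphere (0 : E) 1 ↦ f x)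
    fun r : Set.Ioi (0 : ℝ) ↦ (r : ℝ) ^ m • g r

end PolarCoordinates

section GaussianMoments

open scoped Nat

/-- The `k`-th moment of the standard normal distribution. It parametrizes the one-dimensional
integrals `∫ x, x ^ k * exp (-x ^ 2)`. The truncated subtraction at `k = 0` gives the
correct value, because `0‼ = 1`. -/
noncomputable def stdGaussianMoment (k : ℕ) : ℝ := if Even k then ((k - 1)‼ : ℝ) else 0

theorem stdGaussianMoment_add_two (k : ℕ) :
    stdGaussianMoment (k + 2) = (k + 1) * stdGaussianMoment k := by
  simp [stdGaussianMoment, Nat.even_add, Nat.doubleFactorial_add_one]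

theorem stdGaussianMoment_add_ite (k : ℕ) (b : Prop) [Decidable b] :
    stdGaussianMoment (k + if b then 1 else 0) = if (Odd k ↔ b) then ((eta k)‼ : ℝ) else 0 := by
  by_cases hk : Even k <;> by_cases hb : b <;>
    simp [stdGaussianMoment, eta, hb, hk, Nat.even_add_one, ← Nat.not_even_iff_odd]

theorem integral_Ioi_pow_mul_exp_neg_sq (k : ℕ) :
    ∫ x in Set.Ioi (0 : ℝ), x ^ k * Real.exp (-x ^ 2) = Real.Gamma ((k + 1) / 2) / 2 := by
  have h := integral_rpow_mul_exp_neg_rpow (p := 2) (q := k) two_pos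
    (neg_one_lt_zero.trans_le k.cast_nonneg)
  simp only [Real.rpow_natCast, Real.rpow_ofNat] at h
  rw [h, one_div_mul_eq_div]

theorem integral_pow_mul_exp_neg_sq (k : ℕ) :
    ∫ x : ℝ, x ^ k * Real.exp (-x ^ 2) = stdGaussianMoment k * √Real.pi / √2 ^ k := by
  rcases k.even_or_odd' with ⟨m, rfl | rfl⟩
  · have fold := integral_comp_abs (f := fun x : ℝ ↦ x ^ (2 * m) * Real.exp (-x ^ 2))
    simp only [sq_abs, (even_two_mul m).pow_abs] at fold
    have half : (((2 * m : ℕ) : ℝ) + 1) / 2 = m + 1 / 2 := by push_cast; ring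
    rw [fold, integral_Ioi_pow_mul_exp_neg_sq, half, Real.Gamma_nat_add_half, pow_mul,
      Real.sq_sqrt zero_le_two, stdGaussianMoment, if_pos (even_two_mul m)]
    ring
  · have hodd := odd_two_mul_add_one m
    have neg := integral_neg_eq_self (fun x : ℝ ↦ x ^ (2 * m + 1) * Real.exp (-x ^ 2)) volume
    simp only [hodd.neg_pow, even_two.neg_pow, neg_mul, integral_neg] at neg
    rw [stdGaussianMoment, if_neg (Nat.not_even_iff_odd.mpr hodd), zero_mul, zero_div]
    linarith

variable {ι : Type*} [Fintype ι]

theorem prod_stdGaussianMoment_add_ite_mem [DecidableEq ι] (μ : ι → ℕ) (s : Finset ι) :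
    ∏ k, stdGaussianMoment (μ k + if k ∈ s then 1 else 0) =
      if Finset.univ.filter (fun k ↦ Odd (μ k)) = s then ∏ k, ((eta (μ k))‼ : ℝ) else 0 := by
  simp only [stdGaussianMoment_add_ite, Finset.prod_ite_zero, Finset.ext_iff, Finset.mem_filter,
    Finset.mem_univ, true_and, true_imp_iff]

theorem integral_euclideanSpace_prod_pow_mul_exp_neg_norm_sq (ν : ι → ℕ) :
    ∫ x : EuclideanSpace ℝ ι, (∏ k, x k ^ ν k) * Real.exp (-‖x‖ ^ 2) =
      Real.pi ^ ((Fintype.card ι : ℝ) / 2) / √2 ^ (∑ k, ν k) * ∏ k, stdGaussianMoment (ν k) := by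
  have sqrt_pi_pow : √Real.pi ^ Fintype.card ι = Real.pi ^ ((Fintype.card ι : ℝ) / 2) := by
    rw [Real.sqrt_eq_rpow, ← Real.rpow_mul_natCast Real.pi_pos.le, one_div_mul_eq_div]
  calc ∫ x : EuclideanSpace ℝ ι, (∏ k, x k ^ ν k) * Real.exp (-‖x‖ ^ 2)
      = ∫ x : ι → ℝ, ∏ k, x k ^ ν k * Real.exp (-x k ^ 2) := by
        rw [← (PiLp.volume_preserving_toLp ι).integral_comp
          (MeasurableEquiv.toLp 2 (ι → ℝ)).measurableEmbedding]
        simp [EuclideanSpace.norm_sq_eq, Finset.prod_mul_distrib, ← Real.exp_sum]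
    _ = ∏ k, (stdGaussianMoment (ν k) * √Real.pi / √2 ^ ν k) := by
        simp_rw [← integral_pow_mul_exp_neg_sq]
        exact integral_fintype_prod_volume_eq_prod fun k (x : ℝ) ↦ x ^ ν k * Real.exp (-x ^ 2)
    _ = _ := by
        rw [Finset.prod_div_distrib, Finset.prod_mul_distrib, Finset.prod_pow_eq_pow_sum,
          Finset.prod_const, Finset.card_univ, sqrt_pi_pow]
        ring

theorem integral_sphere_prod_pow [Nonempty ι] (ν : ι → ℕ) :
    ∫ x : sphere (0 : EuclideanSpace ℝ ι) 1, ∏ k, (x : EuclideanSpace ℝ ι) k ^ ν k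
        ∂volume.toSphere =
      2 * Real.pi ^ ((Fintype.card ι : ℝ) / 2) /
          (√2 ^ (∑ k, ν k) * Real.Gamma ((Fintype.card ι + (∑ k, ν k : ℕ)) / 2)) *
        ∏ k, stdGaussianMoment (ν k) := by
  have homogeneous (r : ℝ) (_ : 0 < r) (x : EuclideanSpace ℝ ι) :
      ∏ k, (r • x) k ^ ν k = r ^ (∑ k, ν k) * ∏ k, x k ^ ν k := by
    simp [mul_pow, Finset.prod_mul_distrib, Finset.prod_pow_eq_pow_sum]
  have polar := integral_homogeneous_smul_fun_norm_addHaar volume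
    (f := fun x : EuclideanSpace ℝ ι ↦ ∏ k, x k ^ ν k) homogeneous
    fun r ↦ Real.exp (-r ^ 2)
  have exponent : ((Fintype.card ι - 1 + ∑ k, ν k : ℕ) + 1 : ℝ) =
      Fintype.card ι + (∑ k, ν k : ℕ) := by
    rw [Nat.cast_add, Nat.cast_pred Fintype.card_pos]
    ring
  simp only [smul_eq_mul, finrank_euclideanSpace, integral_Ioi_pow_mul_exp_neg_sq, exponent,
    integral_euclideanSpace_prod_pow_mul_exp_neg_norm_sq] at polar
  have Gamma_ne_zero : Real.Gamma ((Fintype.card ι + (∑ k, ν k : ℕ)) / 2) ≠ 0 :=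
    (Real.Gamma_pos_of_pos (by have := Fintype.card_pos (α := ι); positivity)).ne'
  field_simp at polar ⊢
  linarith

end GaussianMoments

theorem prod_pow_mul_mul_eq_prod_pow_add_single {ι R : Type*} [Fintype ι] [CommMonoid R]
    (x : ι → R) (μ : ι →₀ ℕ) (i j : ι) :
    (∏ k, x k ^ μ k) * x i * x j = ∏ k, x k ^ (μ + .single i 1 + .single j 1) k := by
  classical
  simp_rw [Finsupp.add_apply, pow_add, Finset.prod_mul_distrib]
  simp [Finsupp.single_apply, pow_ite]

section Psi

variable {n : ℕ} (μ : Fin n →₀ ℕ)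

theorem Psi_apply_self_eq_prod_stdGaussianMoment (i : Fin n) :
    Psi μ i i = ∏ k, stdGaussianMoment ((μ + .single i 1 + .single i 1) k) := by
  have factor (k : Fin n) : stdGaussianMoment ((μ + .single i 1 + .single i 1) k) =
      (if i = k then (μ k : ℝ) + 1 else 1) * stdGaussianMoment (μ k) := by
    by_cases hk : i = k <;> simp [hk, add_assoc, stdGaussianMoment_add_two]
  have moments := prod_stdGaussianMoment_add_ite_mem μ ∅
  simp only [Finset.notMem_empty, if_false, add_zero, Finset.filter_eq_empty_iff,
    Finset.mem_univ, true_imp_iff, Nat.not_odd_iff_even] at moments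
  simp_rw [factor, Finset.prod_mul_distrib, moments]
  simp [Psi, mul_comm]

theorem Psi_apply_eq_prod_stdGaussianMoment_of_ne {i j : Fin n} (hij : i ≠ j) :
    Psi μ i j = ∏ k, stdGaussianMoment ((μ + .single i 1 + .single j 1) k) := by
  have shift (k : Fin n) : (μ + .single i 1 + .single j 1) k =
      μ k + if k ∈ ({i, j} : Finset (Fin n)) then 1 else 0 := by
    simp only [Finsupp.add_apply, Finsupp.single_apply, Finset.mem_insert, Finset.mem_singleton]
    grind
  have not_all_even (h : Finset.univ.filter (fun k ↦ Odd (μ k)) = {i, j}) :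
      ¬ ∀ k, Even (μ k) := by
    have hi : i ∈ Finset.univ.filter fun k ↦ Odd (μ k) := by simp [h]
    exact fun even ↦ Nat.not_even_iff_odd.mpr (Finset.mem_filter.mp hi).2 (even i)
  simp_rw [shift, prod_stdGaussianMoment_add_ite_mem]
  by_cases h : Finset.univ.filter (fun k ↦ Odd (μ k)) = {i, j}
  · simp [Psi, hij, h, not_all_even h]
  · simp [Psi, hij, h]

theorem Psi_apply_eq_prod_stdGaussianMoment (i j : Fin n) :
    Psi μ i j = ∏ k, stdGaussianMoment ((μ + .single i 1 + .single j 1) k) := by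
  rcases eq_or_ne i j with rfl | hij
  · exact Psi_apply_self_eq_prod_stdGaussianMoment μ i
  · exact Psi_apply_eq_prod_stdGaussianMoment_of_ne μ hij

theorem integral_sphere_prod_pow_mul_mul (i j : Fin n) :
    ∫ x : sphere (0 : EuclideanSpace ℝ (Fin n)) 1,
        (∏ k, (x : EuclideanSpace ℝ (Fin n)) k ^ μ k) * (x : EuclideanSpace ℝ (Fin n)) i
          * (x : EuclideanSpace ℝ (Fin n)) j ∂volume.toSphere =
      Real.pi ^ ((n : ℝ) / 2) / (√2 ^ μ.degree * Real.Gamma ((n : ℝ) / 2 + μ.degree / 2 + 1)) *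
        Psi μ i j := by
  have : Nonempty (Fin n) := ⟨i⟩
  have degree : ∑ k, (μ + .single i 1 + .single j 1) k = μ.degree + 2 := by
    rw [← Finsupp.degree_eq_sum]
    simp
  have argument : ((n : ℝ) + (μ.degree + 2 : ℕ)) / 2 = n / 2 + μ.degree / 2 + 1 := by
    push_cast
    ring
  simp_rw [prod_pow_mul_mul_eq_prod_pow_add_single
    (fun k ↦ (_ : EuclideanSpace ℝ (Fin n)) k) μ i j]
  rw [integral_sphere_prod_pow, degree, Fintype.card_fin, argument, pow_add,
    Real.sq_sqrt zero_le_two, Psi_apply_eq_prod_stdGaussianMoment]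
  congr 1
  rw [mul_right_comm, mul_comm 2, mul_div_mul_right _ _ two_ne_zero]

end Psi

theorem pwCov_formula_general {n m : ℕ} (p : MvPolynomial (Fin n) ℝ) (hp : p.IsHomogeneous m) :
    (Matrix.of fun i j ↦ ∫ x : sphere (0 : EuclideanSpace ℝ (Fin n)) 1,
        eval (fun k ↦ (x : EuclideanSpace ℝ (Fin n)) k) p * (x : EuclideanSpace ℝ (Fin n)) i
          * (x : EuclideanSpace ℝ (Fin n)) j ∂volume.toSphere) =
      (Real.pi ^ ((n : ℝ) / 2) / (√2 ^ m * Real.Gamma ((n : ℝ) / 2 + m / 2 + 1))) •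
        ∑ μ ∈ p.support, p.coeff μ • Psi μ := by
  ext i j
  simp only [Matrix.of_apply, Matrix.smul_apply, Matrix.sum_apply, smul_eq_mul, eval_eq',
    Finset.sum_mul, mul_assoc (p.coeff _)]
  rw [integral_finsetSum, Finset.mul_sum]
  · refine Finset.sum_congr rfl fun μ hμ ↦ ?_
    have degree : μ.degree = m := not_imp_comm.mp hp.coeff_eq_zero (mem_support_iff.mp hμ)
    rw [integral_const_mul, integral_sphere_prod_pow_mul_mul, degree, mul_left_comm]
  · intro μ _
    exact Continuous.integrable_of_hasCompactSupport (by fun_prop) (.of_compactSpace _)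

/-- for homogeneous f of degree d, writing f² = Σ a·x^μ,
Cov(f) = (π^{n/2} / (2^d Γ(n/2+d+1))) Σ a·Ψ(x^μ). -/
theorem pwCov_formula {n d : ℕ} (f : MvPolynomial (Fin n) ℝ) (hf : f.IsHomogeneous d) :
    pwCov (fun y => eval y f)
      = (Real.pi ^ ((n : ℝ) / 2) / (2 ^ d * Real.Gamma ((n : ℝ) / 2 + d + 1))) •
          ∑ μ ∈ (f ^ 2).support, (f ^ 2).coeff μ • Psi μ := by
  have sqrt_two_pow : √2 ^ (d * 2) = (2 : ℝ) ^ d := by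
    rw [mul_comm, pow_mul, Real.sq_sqrt zero_le_two]
  simpa [pwCov, sqrt_two_pow] using pwCov_formula_general (f ^ 2) (hf.pow 2)
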